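/- arXiv:2603.17660 — 2 statements merged into one kernel-verified Lean document; each statement's English description precedes it below -/
import Mathlib

section
/- Let t ≥ 4 and let p_0, p_1, …, p_{2^{t-2}-2} be polynomials in F_2[w_2,w_3], regarded as elements of F_2[w_2,w_3,w_4]. Then the sum Σ_{j=0}^{2^{t-2}-2} p_j·w_4^j belongs to I_{2^t-1,4} if and only if p_j belongs to I_{2^t,3} for every j ∈ {0,1,…,2^{t-2}-2}. -/
open MvPolynomial

/-- The polynomials `g_r = g_r^{(4)}` in `F_2[w_2,w_3,w_4]` (variables `X 0 = w_2`,
`X 1 = w_3`, `X 2 = w_4`): `g_0 = 1`, `g_r = 0` for `r < 0`, and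
`g_r = w_2·g_{r-2} + w_3·g_{r-3} + w_4·g_{r-4}` for `r ≥ 1`. -/
noncomputable def g4 : ℤ → MvPolynomial (Fin 3) (ZMod 2)
  | r =>
    if r ≤ 0 then (if r = 0 then 1 else 0)
    else X 0 * g4 (r - 2) + X 1 * g4 (r - 3) + X 2 * g4 (r - 4)
  termination_by r => r.toNat
  decreasing_by all_goals omega

/-- The ideal `I_{n,4} = (g_{n-3}, g_{n-2}, g_{n-1}, g_n)` of `F_2[w_2,w_3,w_4]`. -/
noncomputable def I4 (n : ℤ) : Ideal (MvPolynomial (Fin 3) (ZMod 2)) :=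
  Ideal.span {g4 (n - 3), g4 (n - 2), g4 (n - 1), g4 n}

/-- The polynomials `g_r^{(3)}` in `F_2[w_2,w_3]` (variables `X 0 = w_2`, `X 1 = w_3`):
`g^{(3)}_0 = 1`, `g^{(3)}_r = 0` for `r < 0`, and
`g^{(3)}_r = w_2·g^{(3)}_{r-2} + w_3·g^{(3)}_{r-3}` for `r ≥ 1`. -/
noncomputable def g3 : ℤ → MvPolynomial (Fin 2) (ZMod 2)
  | r =>
    if r ≤ 0 then (if r = 0 then 1 else 0)
    else X 0 * g3 (r - 2) + X 1 * g3 (r - 3)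
  termination_by r => r.toNat
  decreasing_by all_goals omega

/-- The ideal `I_{n,3} = (g^{(3)}_{n-2}, g^{(3)}_{n-1}, g^{(3)}_n)` of `F_2[w_2,w_3]`. -/
noncomputable def I3 (n : ℤ) : Ideal (MvPolynomial (Fin 2) (ZMod 2)) :=
  Ideal.span {g3 (n - 2), g3 (n - 1), g3 n}

/-- The natural inclusion `F_2[w_2,w_3] ⊆ F_2[w_2,w_3,w_4]`. -/
noncomputable def incl : MvPolynomial (Fin 2) (ZMod 2) →+* MvPolynomial (Fin 3) (ZMod 2) :=
  (rename (Fin.castSucc : Fin 2 → Fin 3)).toRingHom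

/-!
In characteristic two the sequences `g = g4` and `g3` satisfy the doubling formulas
`g_{2m} = g_m² + w₂ g_{m-1}² + w₄ g_{m-2}²` and `g_{2m+1} = w₃ g_{m-1}²` (with `w₄ = 0` for `g3`).
Hence `g_{q-3} = 0` for `q = 2^t`, and then `g_{q-2}`, `g_{q-1}` are obtained by a recursion not
involving `w₄`, so they agree with their counterparts in `F₂[w₂, w₃]`. Therefore `I4 (q - 1)` is
generated by `I3 q` and the single further element `g_{q-4}`. As a polynomial in `w₄`, the latter is
monic of degree `q / 4 - 1`, so reduction modulo it leaves polynomials of smaller degree in `w₄`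
unchanged.
-/

/-- The coefficient sequence of the power series `1 / (1 - a x² - b x³ - c x⁴)`, extended by zero to
negative indices. Both `g4` and `g3` (with `c = 0`) are of this form. -/
structure IsDualSequence {R : Type*} [CommRing R] (a b c : R) (f : ℤ → R) : Prop where
  apply_of_neg : ∀ r < 0, f r = 0
  apply_zero : f 0 = 1
  apply_of_pos : ∀ r > 0, f r = a * f (r - 2) + b * f (r - 3) + c * f (r - 4)

namespace IsDualSequence

theorem map {R S : Type*} [CommRing R] [CommRing S] {a b c : R} {f : ℤ → R}
    (hf : IsDualSequence a b c f) (φ : R →+* S) :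
    IsDualSequence (φ a) (φ b) (φ c) (fun r ↦ φ (f r)) where
  apply_of_neg r hr := by rw [hf.apply_of_neg r hr, map_zero]
  apply_zero := by rw [hf.apply_zero, map_one]
  apply_of_pos r hr := by simp only [hf.apply_of_pos r hr, map_add, map_mul]

section CharTwo

variable {R : Type*} [CommRing R] [CharP R 2] {a b c c' : R} {f f' : ℤ → R}

/- With `F` the generating series and `P = 1 + a x² + b x³ + c x⁴`, this is `F = P F²` read off in
even and odd degrees, since squaring is additive. -/
theorem apply_two_mul_and_apply_two_mul_add_one (hf : IsDualSequence a b c f) (m : ℤ) :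
    f (2 * m) = f m ^ 2 + a * f (m - 1) ^ 2 + c * f (m - 2) ^ 2 ∧
      f (2 * m + 1) = b * f (m - 1) ^ 2 := by
  have two_eq_zero : (2 : R) = 0 := CharTwo.two_eq_zero
  induction m using Int.strongRec (m := 0) with
  | lt m hm =>
    simp [hf.apply_of_neg (2 * m) (by lia), hf.apply_of_neg (2 * m + 1) (by lia),
      hf.apply_of_neg m hm, hf.apply_of_neg (m - 1) (by lia), hf.apply_of_neg (m - 2) (by lia)]
  | ge m hm ih =>
    have even₁ : f (2 * m - 2) = f (m - 1) ^ 2 + a * f (m - 2) ^ 2 + c * f (m - 3) ^ 2 := by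
      grind [ih (m - 1) (by lia)]
    have odd₁ : f (2 * m - 1) = b * f (m - 2) ^ 2 := by grind [ih (m - 1) (by lia)]
    have even₂ : f (2 * m - 4) = f (m - 2) ^ 2 + a * f (m - 3) ^ 2 + c * f (m - 4) ^ 2 := by
      grind [ih (m - 2) (by lia)]
    have odd₂ : f (2 * m - 3) = b * f (m - 3) ^ 2 := by grind [ih (m - 2) (by lia)]
    constructor
    · obtain rfl | hpos := hm.eq_or_lt
      · simp [hf.apply_zero, hf.apply_of_neg]
      · rw [hf.apply_of_pos (2 * m) (by lia), even₁, odd₂, even₂, hf.apply_of_pos m hpos,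
          CharTwo.add_sq, CharTwo.add_sq]
        linear_combination a * c * f (m - 3) ^ 2 * two_eq_zero
    · have recurrence :
          f (2 * m + 1) = a * f (2 * m - 1) + b * f (2 * m - 2) + c * f (2 * m - 3) := by
        grind [hf.apply_of_pos (2 * m + 1) (by lia)]
      rw [recurrence, odd₁, even₁, odd₂]
      linear_combination (a * b * f (m - 2) ^ 2 + b * c * f (m - 3) ^ 2) * two_eq_zero

theorem apply_two_mul (hf : IsDualSequence a b c f) (m : ℤ) :
    f (2 * m) = f m ^ 2 + a * f (m - 1) ^ 2 + c * f (m - 2) ^ 2 :=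
  (hf.apply_two_mul_and_apply_two_mul_add_one m).1

theorem apply_two_mul_add_one (hf : IsDualSequence a b c f) (m : ℤ) :
    f (2 * m + 1) = b * f (m - 1) ^ 2 :=
  (hf.apply_two_mul_and_apply_two_mul_add_one m).2

theorem apply_two_pow_sub_three (hf : IsDualSequence a b c f) (s : ℕ) :
    f (2 ^ (s + 1) - 3) = 0 := by
  induction s with
  | zero => exact hf.apply_of_neg _ (by norm_num)
  | succ s ih =>
    calc f (2 ^ (s + 2) - 3) = f (2 * (2 ^ (s + 1) - 2) + 1) := by congr 1; ring
      _ = b * f (2 ^ (s + 1) - 2 - 1) ^ 2 := hf.apply_two_mul_add_one _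
      _ = 0 := by rw [sub_sub, show (2 + 1 : ℤ) = 3 by norm_num, ih]; ring

theorem apply_two_pow_succ_sub_two (hf : IsDualSequence a b c f) (s : ℕ) :
    f (2 ^ (s + 2) - 2) = f (2 ^ (s + 1) - 1) ^ 2 + a * f (2 ^ (s + 1) - 2) ^ 2 := by
  calc f (2 ^ (s + 2) - 2) = f (2 * (2 ^ (s + 1) - 1)) := by congr 1; ring
    _ = f (2 ^ (s + 1) - 1) ^ 2 + a * f (2 ^ (s + 1) - 2) ^ 2 + c * f (2 ^ (s + 1) - 3) ^ 2 := by
      rw [hf.apply_two_mul]; ring_nf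
    _ = _ := by rw [hf.apply_two_pow_sub_three]; ring

theorem apply_two_pow_succ_sub_one (hf : IsDualSequence a b c f) (s : ℕ) :
    f (2 ^ (s + 2) - 1) = b * f (2 ^ (s + 1) - 2) ^ 2 := by
  calc f (2 ^ (s + 2) - 1) = f (2 * (2 ^ (s + 1) - 1) + 1) := by congr 1; ring
    _ = b * f (2 ^ (s + 1) - 2) ^ 2 := by rw [hf.apply_two_mul_add_one]; ring_nf

theorem apply_two_pow_sub_two_eq_and_apply_two_pow_sub_one_eq (hf : IsDualSequence a b c f)
    (hf' : IsDualSequence a b c' f') (s : ℕ) :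
    f (2 ^ (s + 1) - 2) = f' (2 ^ (s + 1) - 2) ∧ f (2 ^ (s + 1) - 1) = f' (2 ^ (s + 1) - 1) := by
  induction s with
  | zero =>
    norm_num [hf.apply_zero, hf'.apply_zero, hf.apply_of_pos 1, hf'.apply_of_pos 1,
      hf.apply_of_neg, hf'.apply_of_neg]
  | succ s ih =>
    rw [hf.apply_two_pow_succ_sub_two, hf'.apply_two_pow_succ_sub_two,
      hf.apply_two_pow_succ_sub_one, hf'.apply_two_pow_succ_sub_one, ih.1, ih.2]
    exact ⟨rfl, rfl⟩

end CharTwo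

section Polynomial

variable {R : Type*} [CommRing R] {a b : R} {f : ℤ → Polynomial R}

theorem coeff_eq_zero_of_lt_four_mul
    (hf : IsDualSequence (Polynomial.C a) (Polynomial.C b) Polynomial.X f)
    (r : ℤ) : ∀ k : ℕ, r < 4 * k → (f r).coeff k = 0 := by
  induction r using Int.strongRec (m := 0) with
  | lt r hr => simp [hf.apply_of_neg r hr]
  | ge r hr ih =>
    rintro (_ | k) hk
    · lia
    obtain rfl | hpos := hr.eq_or_lt
    · simp [hf.apply_zero, Polynomial.coeff_one]
    · simp [hf.apply_of_pos r hpos, ih (r - 2) (by lia) (k + 1) (by lia),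
        ih (r - 3) (by lia) (k + 1) (by lia), ih (r - 4) (by lia) k (by lia)]

theorem coeff_four_mul (hf : IsDualSequence (Polynomial.C a) (Polynomial.C b) Polynomial.X f)
    (k : ℕ) : (f (4 * k)).coeff k = 1 := by
  induction k with
  | zero => simp [hf.apply_zero]
  | succ k ih =>
    have hsub : (4 * (k + 1 : ℕ) - 4 : ℤ) = 4 * k := by lia
    rw [hf.apply_of_pos (4 * (k + 1 : ℕ)) (by lia), hsub, Polynomial.coeff_add,
      Polynomial.coeff_add, Polynomial.coeff_C_mul, Polynomial.coeff_C_mul, Polynomial.coeff_X_mul,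
      hf.coeff_eq_zero_of_lt_four_mul _ (k + 1) (by lia),
      hf.coeff_eq_zero_of_lt_four_mul _ (k + 1) (by lia), ih]
    simp

theorem isMonicOfDegree_four_mul [Nontrivial R]
    (hf : IsDualSequence (Polynomial.C a) (Polynomial.C b) Polynomial.X f) (k : ℕ) :
    (f (4 * k)).IsMonicOfDegree k := by
  rw [Polynomial.isMonicOfDegree_iff]
  exact ⟨Polynomial.natDegree_le_iff_coeff_eq_zero.2 fun n hn ↦
    hf.coeff_eq_zero_of_lt_four_mul _ n (by lia), hf.coeff_four_mul k⟩

end Polynomial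

end IsDualSequence

section MonicReduction

variable {R : Type*} [CommRing R] {J : Ideal R} {M : Polynomial R}

theorem modByMonic_mem_map_C (hM : M.Monic) {u : Polynomial R} (hu : u ∈ J.map Polynomial.C) :
    u %ₘ M ∈ J.map Polynomial.C := by
  rw [← Ideal.mk_ker (I := J), ← Polynomial.ker_mapRingHom, RingHom.mem_ker,
    Polynomial.coe_mapRingHom] at hu ⊢
  rw [Polynomial.map_modByMonic _ hM, hu, Polynomial.zero_modByMonic]

theorem mem_map_C_sup_span_singleton_iff (hM : M.Monic) {F : Polynomial R}
    (hF : F.degree < M.degree) :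
    F ∈ J.map Polynomial.C ⊔ Ideal.span {M} ↔ F ∈ J.map Polynomial.C := by
  refine ⟨fun h ↦ ?_, fun h ↦ Ideal.mem_sup_left h⟩
  nontriviality R
  obtain ⟨u, hu, v, hv, rfl⟩ := Submodule.mem_sup.1 h
  have hv_mod : v %ₘ M = 0 :=
    (Polynomial.modByMonic_eq_zero_iff_dvd hM).2 (Ideal.mem_span_singleton.1 hv)
  rw [← (Polynomial.modByMonic_eq_self_iff hM).2 hF, Polynomial.add_modByMonic, hv_mod, add_zero]
  exact modByMonic_mem_map_C hM hu

theorem sum_C_mul_X_pow_mem_map_C_iff (p : ℕ → R) (k : ℕ) :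
    ∑ j ∈ Finset.range k, Polynomial.C (p j) * Polynomial.X ^ j ∈ J.map Polynomial.C ↔
      ∀ j < k, p j ∈ J := by
  simp only [Ideal.mem_map_C_iff, Polynomial.finsetSum_coeff, Polynomial.coeff_C_mul_X_pow,
    Finset.sum_ite_eq, Finset.mem_range]
  exact forall_congr' fun j ↦ by split_ifs with hj <;> simp [hj]

theorem sum_C_mul_X_pow_mem_map_C_sup_span_singleton_iff [Nontrivial R] {k : ℕ}
    (hM : M.IsMonicOfDegree k) (p : ℕ → R) :
    ∑ j ∈ Finset.range k, Polynomial.C (p j) * Polynomial.X ^ j ∈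
      J.map Polynomial.C ⊔ Ideal.span {M} ↔ ∀ j < k, p j ∈ J := by
  have hdeg : (∑ j ∈ Finset.range k, Polynomial.C (p j) * Polynomial.X ^ j).degree < M.degree := by
    rw [Polynomial.degree_eq_natDegree hM.ne_zero, hM.natDegree_eq, Finset.sum_range]
    exact Polynomial.degree_sum_fin_lt _
  rw [mem_map_C_sup_span_singleton_iff hM.monic hdeg, sum_C_mul_X_pow_mem_map_C_iff]

end MonicReduction

theorem isDualSequence_g4 : IsDualSequence (X 0) (X 1) (X 2) g4 where
  apply_of_neg r hr := by rw [g4, if_pos hr.le, if_neg hr.ne]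
  apply_zero := by simp [g4]
  apply_of_pos r hr := by rw [g4, if_neg hr.not_ge]

theorem isDualSequence_g3 : IsDualSequence (X 0) (X 1) 0 g3 where
  apply_of_neg r hr := by rw [g3, if_pos hr.le, if_neg hr.ne]
  apply_zero := by simp [g3]
  apply_of_pos r hr := by rw [g3, if_neg hr.not_ge, zero_mul, add_zero]

theorem isDualSequence_incl_g3 : IsDualSequence (X 0) (X 1) 0 (fun r ↦ incl (g3 r)) := by
  simpa [incl] using isDualSequence_g3.map incl

theorem incl_g3_two_pow_sub_two (s : ℕ) :
    incl (g3 (2 ^ (s + 1) - 2)) = g4 (2 ^ (s + 1) - 2) :=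
  (isDualSequence_incl_g3.apply_two_pow_sub_two_eq_and_apply_two_pow_sub_one_eq
    isDualSequence_g4 s).1

theorem incl_g3_two_pow_sub_one (s : ℕ) :
    incl (g3 (2 ^ (s + 1) - 1)) = g4 (2 ^ (s + 1) - 1) :=
  (isDualSequence_incl_g3.apply_two_pow_sub_two_eq_and_apply_two_pow_sub_one_eq
    isDualSequence_g4 s).2

theorem g3_two_pow (s : ℕ) : g3 (2 ^ (s + 1)) = X 0 * g3 (2 ^ (s + 1) - 2) := by
  rw [isDualSequence_g3.apply_of_pos _ (by positivity), isDualSequence_g3.apply_two_pow_sub_three]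
  ring

theorem I3_two_pow (s : ℕ) :
    I3 (2 ^ (s + 1)) = Ideal.span {g3 (2 ^ (s + 1) - 2), g3 (2 ^ (s + 1) - 1)} := by
  have hmem : g3 (2 ^ (s + 1)) ∈ Ideal.span {g3 (2 ^ (s + 1) - 2), g3 (2 ^ (s + 1) - 1)} := by
    rw [g3_two_pow]
    exact Ideal.mul_mem_left _ _ (Ideal.subset_span (by simp))
  refine le_antisymm ?_ (Ideal.span_mono (by grind))
  rw [I3, Ideal.span_le]
  rintro _ (rfl | rfl | rfl)
  exacts [Ideal.subset_span (by simp), Ideal.subset_span (by simp), hmem]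

theorem I4_two_pow_sub_one (s : ℕ) :
    I4 (2 ^ (s + 1) - 1) = (I3 (2 ^ (s + 1))).map incl ⊔ Ideal.span {g4 (2 ^ (s + 1) - 4)} := by
  have hI4 : I4 (2 ^ (s + 1) - 1) =
      Ideal.span {g4 (2 ^ (s + 1) - 4), 0, g4 (2 ^ (s + 1) - 2), g4 (2 ^ (s + 1) - 1)} := by
    rw [I4, ← isDualSequence_g4.apply_two_pow_sub_three s]
    ring_nf
  rw [hI4, I3_two_pow, Ideal.map_span, Set.image_pair, incl_g3_two_pow_sub_two,
    incl_g3_two_pow_sub_one, ← Ideal.span_union, Set.insert_comm, Ideal.span_insert_zero,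
    Set.union_singleton]

/-- The identification `F₂[w₂, w₃, w₄] → F₂[w₂, w₃][w₄]`, in which the degree in `w₄` is visible. -/
noncomputable def toPolynomialW4 :
    MvPolynomial (Fin 3) (ZMod 2) →+* Polynomial (MvPolynomial (Fin 2) (ZMod 2)) :=
  (aeval ![Polynomial.C (X 0), Polynomial.C (X 1), Polynomial.X] :
    MvPolynomial (Fin 3) (ZMod 2) →ₐ[ZMod 2] Polynomial (MvPolynomial (Fin 2) (ZMod 2)))

theorem toPolynomialW4_X_two : toPolynomialW4 (X 2) = Polynomial.X := by
  simp [toPolynomialW4]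

theorem toPolynomialW4_comp_incl : toPolynomialW4.comp incl = Polynomial.C := by
  refine ringHom_ext (fun r ↦ ?_) (fun i ↦ ?_)
  · simp [toPolynomialW4, incl]
  · fin_cases i <;> simp [toPolynomialW4, incl]

theorem toPolynomialW4_incl (p : MvPolynomial (Fin 2) (ZMod 2)) :
    toPolynomialW4 (incl p) = Polynomial.C p :=
  RingHom.congr_fun toPolynomialW4_comp_incl p

theorem isMonicOfDegree_toPolynomialW4_g4 (k : ℕ) :
    (toPolynomialW4 (g4 (4 * k))).IsMonicOfDegree k := by
  have hseq : IsDualSequence (Polynomial.C (X 0)) (Polynomial.C (X 1)) Polynomial.X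
      (fun r ↦ toPolynomialW4 (g4 r)) := by
    simpa [toPolynomialW4] using isDualSequence_g4.map toPolynomialW4
  exact hseq.isMonicOfDegree_four_mul k

theorem sum_incl_mul_X_pow_mem_map_incl_sup_span_g4_iff (J : Ideal (MvPolynomial (Fin 2) (ZMod 2)))
    (k : ℕ) (p : ℕ → MvPolynomial (Fin 2) (ZMod 2)) :
    ∑ j ∈ Finset.range k, incl (p j) * X 2 ^ j ∈ J.map incl ⊔ Ideal.span {g4 (4 * k)} ↔
      ∀ j < k, p j ∈ J := by
  constructor
  · intro h
    have hmap := Ideal.mem_map_of_mem toPolynomialW4 h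
    rw [Ideal.map_sup, Ideal.map_map, toPolynomialW4_comp_incl, Ideal.map_span,
      Set.image_singleton] at hmap
    simp only [map_sum, map_mul, map_pow, toPolynomialW4_incl, toPolynomialW4_X_two] at hmap
    exact (sum_C_mul_X_pow_mem_map_C_sup_span_singleton_iff
      (isMonicOfDegree_toPolynomialW4_g4 k) p).1 hmap
  · exact fun h ↦ Ideal.mem_sup_left <| Ideal.sum_mem _ fun j hj ↦
      Ideal.mul_mem_right _ _ <| Ideal.mem_map_of_mem incl <| h j (Finset.mem_range.1 hj)

/-- Lemma 2.7: for `t ≥ 4` and `p_0, …, p_{2^{t-2}-2} ∈ F_2[w_2,w_3]`, the sum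
`Σ_j p_j w_4^j` lies in `I_{2^t-1,4}` iff every `p_j` lies in `I_{2^t,3}`. -/
theorem stmt4 (t : ℕ) (ht : 4 ≤ t) (p : ℕ → MvPolynomial (Fin 2) (ZMod 2)) :
    (∑ j ∈ Finset.range (2 ^ (t - 2) - 1), incl (p j) * X 2 ^ j) ∈ I4 (2 ^ t - 1) ↔
      ∀ j < 2 ^ (t - 2) - 1, p j ∈ I3 (2 ^ t) := by
  obtain ⟨s, rfl⟩ : ∃ s, t = s + 2 := Nat.exists_eq_add_of_le' (by lia)
  have hindex : (2 ^ (s + 2) - 4 : ℤ) = 4 * (2 ^ s - 1 : ℕ) := by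
    push_cast [Nat.one_le_two_pow]
    ring
  rw [I4_two_pow_sub_one, hindex, Nat.add_sub_cancel]
  exact sum_incl_mul_X_pow_mem_map_incl_sup_span_g4_iff _ _ p
end

section
/- Let t ≥ 4 and n ∈ {2^t-2, 2^t-1, 2^t, 2^t+1}. Then w_2^{2^t-4} ∉ I_{n,4} and w_2^{2^t-3} ∈ I_{n,4}; that is, the image of w_2 in the quotient ring F_2[w_2,w_3,w_4]/I_{n,4} has height exactly 2^t-4. (This expresses that the height of the Stiefel–Whitney class w̃_2 in H^*(G̃_{n,4}; F_2) equals 2^t-4.) -/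
open MvPolynomial

/-!
Write `a k = g_{2^(k+1)-2}`. Doubling the index of `g` shows `g_{2^k-3} = 0`,
`g_{2^(k+2)-1} = w₃ * a k ^ 2` and `a (k+2) = w₂ * a (k+1) ^ 2 + (w₃ * a k ^ 2) ^ 2`, so these
polynomials do not involve `w₄`. Let `J k = (a (k+1), w₃ * a k ^ 2)`.

The ideals `I_n` decrease with `n` and `J k ⊆ I_{2^(k+2)+1}`. Since `f ∈ J k` implies
`w₃ * f ^ 2 ∈ J (k+1)`, reducing `w₂` modulo `J k` through
`a (k+1) = w₂ ^ (2^(k+1)-1) + w₃ ^ 2 * c k` gives `w₂ ^ (2^(k+2)-3) ∈ J k`.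

Conversely, differentiating a relation `w₂ ^ (2^(k+3)-4) = u * a (k+2) + v * w₃ * a (k+1) ^ 2`
with respect to `w₂` shows `u ∈ (a (k+2), w₃)`. Hence `w₂ ^ (2^(k+3)-4)` is a multiple of
`a (k+2) ^ 2`, that is of `w₂ ^ (2^(k+3)-2)`, modulo `w₃`, which is absurd. Finally, modulo `J k`
every `f ∈ I_{2^(k+2)-2}` makes `w₄ * f` a multiple of `g_{2^(k+2)-4}`, which is monic of degree
`2^k - 1` in `w₄` and therefore, once `k ≥ 2`, does not divide a nonzero product of `w₄` with
an element free of `w₄`.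
-/

section Dyadic

variable {R : Type*} [CommRing R]

/-- The polynomials `g_{2^(k+1)-2}` of `w₂` and `w₃`, evaluated at elements `x` and `y` of an
arbitrary commutative ring; see `g4_two_pow_sub_two`. -/
def dyadic (x y : R) : ℕ → R
  | 0 => 1
  | 1 => x
  | k + 2 => x * dyadic x y (k + 1) ^ 2 + (y * dyadic x y k ^ 2) ^ 2

/-- The ideal generated by `g_{2^(k+2)-2}` and `g_{2^(k+2)-1}`, evaluated at `x` and `y`. -/
def dyadicIdeal (x y : R) (k : ℕ) : Ideal R :=
  Ideal.span {dyadic x y (k + 1), y * dyadic x y k ^ 2}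

/-- The cofactor of `y ^ 2` in `dyadic x y (k + 1)`, once the pure power of `x` is removed;
see `dyadic_succ_eq_pow_add`. -/
def dyadicTail (x y : R) : ℕ → R
  | 0 => 0
  | k + 1 => dyadic x y k ^ 4 + x * y ^ 2 * dyadicTail x y k ^ 2

variable (x y : R)

theorem map_dyadic {S F : Type*} [CommRing S] [FunLike F R S] [RingHomClass F R S] (φ : F)
    (k : ℕ) :
    φ (dyadic x y k) = dyadic (φ x) (φ y) k := by
  induction k using Nat.twoStepInduction with
  | zero => simp [dyadic]
  | one => simp [dyadic]
  | more k ih ih' => simp [dyadic, ih, ih']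

theorem dyadic_succ_mem_dyadicIdeal (k : ℕ) : dyadic x y (k + 1) ∈ dyadicIdeal x y k :=
  Ideal.subset_span (by simp)

theorem mul_dyadic_sq_mem_dyadicIdeal (k : ℕ) : y * dyadic x y k ^ 2 ∈ dyadicIdeal x y k :=
  Ideal.subset_span (by simp)

section CharTwo

variable [CharP R 2]

theorem dyadic_succ_eq_pow_add (k : ℕ) :
    dyadic x y (k + 1) = x ^ (2 ^ (k + 1) - 1) + y ^ 2 * dyadicTail x y k := by
  induction k with
  | zero => simp [dyadic, dyadicTail]
  | succ k ih =>
    have hexp : 2 ^ (k + 1 + 1) - 1 = (2 ^ (k + 1) - 1) * 2 + 1 := by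
      have : 1 ≤ 2 ^ k := Nat.one_le_two_pow
      omega
    rw [dyadic, dyadicTail, ih, CharTwo.add_sq, hexp]
    ring

variable {x y}

theorem mul_sq_mem_dyadicIdeal_succ {k : ℕ} {f : R} (hf : f ∈ dyadicIdeal x y k) :
    y * f ^ 2 ∈ dyadicIdeal x y (k + 1) := by
  obtain ⟨u, v, rfl⟩ := Ideal.mem_span_pair.mp hf
  refine Ideal.mem_span_pair.mpr ⟨v ^ 2 * y, u ^ 2 - v ^ 2 * x, ?_⟩
  rw [CharTwo.add_sq, dyadic]
  ring

variable (x y)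

theorem pow_three_mul_dyadicTail_sq_mem (k : ℕ) :
    y ^ 3 * dyadicTail x y k ^ 2 ∈ dyadicIdeal x y k := by
  induction k with
  | zero => simp [dyadicTail]
  | succ k ih =>
    have hsplit : y ^ 3 * dyadicTail x y (k + 1) ^ 2 =
        y * (dyadic x y k ^ 2 * (y * dyadic x y k ^ 2)) ^ 2 +
          y * (x * (y ^ 3 * dyadicTail x y k ^ 2)) ^ 2 := by
      rw [dyadicTail, CharTwo.add_sq]
      ring
    rw [hsplit]
    exact add_mem
      (mul_sq_mem_dyadicIdeal_succ (Ideal.mul_mem_left _ _ (mul_dyadic_sq_mem_dyadicIdeal x y k)))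
      (mul_sq_mem_dyadicIdeal_succ (Ideal.mul_mem_left _ _ ih))

theorem pow_mul_dyadic_sq_mem (k : ℕ) :
    x ^ (2 ^ (k + 1) - 1) * dyadic x y k ^ 2 ∈ dyadicIdeal x y k := by
  have hreduce : x ^ (2 ^ (k + 1) - 1) * dyadic x y k ^ 2 =
      dyadic x y k ^ 2 * dyadic x y (k + 1) -
        y * dyadicTail x y k * (y * dyadic x y k ^ 2) := by
    rw [dyadic_succ_eq_pow_add]
    ring
  rw [hreduce]
  exact sub_mem (Ideal.mul_mem_left _ _ (dyadic_succ_mem_dyadicIdeal x y k))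
    (Ideal.mul_mem_left _ _ (mul_dyadic_sq_mem_dyadicIdeal x y k))

theorem pow_mul_mul_dyadicTail_mem (k : ℕ) :
    x ^ (2 ^ (k + 1) - 1) * (y * dyadicTail x y k) ∈ dyadicIdeal x y k := by
  have hreduce : x ^ (2 ^ (k + 1) - 1) * (y * dyadicTail x y k) =
      y * dyadicTail x y k * dyadic x y (k + 1) - y ^ 3 * dyadicTail x y k ^ 2 := by
    rw [dyadic_succ_eq_pow_add]
    ring
  rw [hreduce]
  exact sub_mem (Ideal.mul_mem_left _ _ (dyadic_succ_mem_dyadicIdeal x y k))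
    (pow_three_mul_dyadicTail_sq_mem x y k)

theorem pow_mul_sq_mul_dyadicTail_mem (k : ℕ) :
    x ^ (2 ^ (k + 1) - 2) * (y ^ 2 * dyadicTail x y k) ∈ dyadicIdeal x y k := by
  cases k with
  | zero => simp [dyadicTail]
  | succ k =>
    have hexp : 2 ^ (k + 1 + 1) - 2 = (2 ^ (k + 1) - 1) * 2 := by omega
    have hsplit : x ^ (2 ^ (k + 1 + 1) - 2) * (y ^ 2 * dyadicTail x y (k + 1)) =
        y * (y * (x ^ (2 ^ (k + 1) - 1) * dyadic x y k ^ 2) ^ 2) +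
          x * y * (y * (x ^ (2 ^ (k + 1) - 1) * (y * dyadicTail x y k)) ^ 2) := by
      rw [dyadicTail, hexp, pow_mul]
      ring
    rw [hsplit]
    exact add_mem
      (Ideal.mul_mem_left _ _ (mul_sq_mem_dyadicIdeal_succ (pow_mul_dyadic_sq_mem x y k)))
      (Ideal.mul_mem_left _ _ (mul_sq_mem_dyadicIdeal_succ (pow_mul_mul_dyadicTail_mem x y k)))

theorem pow_two_pow_sub_three_mem_dyadicIdeal (k : ℕ) :
    x ^ (2 ^ (k + 2) - 3) ∈ dyadicIdeal x y k := by
  have hexp : 2 ^ (k + 2) - 3 = (2 ^ (k + 1) - 2) + (2 ^ (k + 1) - 1) := by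
    have : 1 ≤ 2 ^ k := Nat.one_le_two_pow
    grind
  have hreduce : x ^ (2 ^ (k + 2) - 3) = x ^ (2 ^ (k + 1) - 2) * dyadic x y (k + 1) -
      x ^ (2 ^ (k + 1) - 2) * (y ^ 2 * dyadicTail x y k) := by
    rw [dyadic_succ_eq_pow_add, hexp, pow_add]
    ring
  rw [hreduce]
  exact sub_mem (Ideal.mul_mem_left _ _ (dyadic_succ_mem_dyadicIdeal x y k))
    (pow_mul_sq_mul_dyadicTail_mem x y k)

theorem derivation_sq_eq_zero {S : Type*} [CommRing S] [Algebra S R] (D : Derivation S R R)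
    (f : R) : D (f ^ 2) = 0 := by
  rw [Derivation.leibniz_pow, CharTwo.two_nsmul]

end CharTwo

section RelPrime

variable {x y} [DecompositionMonoid R]

theorem isRelPrime_dyadic_right (hxy : IsRelPrime x y) (k : ℕ) :
    IsRelPrime (dyadic x y k) y := by
  induction k using Nat.twoStepInduction with
  | zero => exact isRelPrime_one_left
  | one => exact hxy
  | more k _ ih =>
    have hmul : IsRelPrime (x * dyadic x y (k + 1) ^ 2) y := hxy.mul_left ih.pow_left
    have hcofactor : (y * dyadic x y k ^ 2) ^ 2 = y * (y * dyadic x y k ^ 4) := by ring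
    rw [dyadic, hcofactor]
    exact hmul.add_mul_left_left _

theorem isRelPrime_dyadic_succ (hxy : IsRelPrime x y) (k : ℕ) :
    IsRelPrime (dyadic x y (k + 1)) (y * dyadic x y k ^ 2) := by
  induction k with
  | zero => simpa [dyadic] using hxy
  | succ k ih =>
    refine (isRelPrime_dyadic_right hxy _).mul_right (IsRelPrime.pow_right ?_)
    have hcofactor : x * dyadic x y (k + 1) ^ 2 =
        dyadic x y (k + 1) * (x * dyadic x y (k + 1)) := by ring
    rw [dyadic, hcofactor, add_comm]
    exact ih.symm.pow_left.add_mul_left_left _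

variable [IsDomain R] [CharP R 2] {S : Type*} [CommRing S] [Algebra S R] {D : Derivation S R R}

theorem mem_span_sq_of_derivation_eq_zero {p q f : R} (hDx : D x = 1) (hDy : D y = 0)
    (hp : p ≠ 0) (hpq : IsRelPrime p q) (hDf : D f = 0)
    (hf : f ∈ Ideal.span {x * p ^ 2 + q ^ 2, y * p ^ 2}) :
    f ∈ Ideal.span {(x * p ^ 2 + q ^ 2) ^ 2, y} := by
  obtain ⟨u, v, rfl⟩ := Ideal.mem_span_pair.mp hf
  have hderiv : D u * (x * p ^ 2 + q ^ 2) + u * p ^ 2 + D v * (y * p ^ 2) = 0 := by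
    simp only [map_add, Derivation.leibniz, smul_eq_mul, derivation_sq_eq_zero, hDx, hDy] at hDf
    linear_combination hDf
  have hdvd : p ^ 2 ∣ D u * q ^ 2 :=
    ⟨-(x * D u + u + D v * y), by linear_combination hderiv⟩
  obtain ⟨s, hs⟩ : p ^ 2 ∣ D u := hpq.pow.dvd_of_dvd_mul_right hdvd
  have hu : u = -(s * (x * p ^ 2 + q ^ 2) + D v * y) := by
    apply mul_left_cancel₀ (pow_ne_zero 2 hp)
    rw [hs] at hderiv
    linear_combination hderiv
  refine Ideal.mem_span_pair.mpr ⟨-s, v * p ^ 2 - D v * (x * p ^ 2 + q ^ 2), ?_⟩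
  linear_combination -(x * p ^ 2 + q ^ 2) * hu

theorem pow_two_pow_sub_four_notMem_dyadicIdeal (hDx : D x = 1) (hDy : D y = 0)
    (hxy : IsRelPrime x y) (hproper : Ideal.span {x, y} ≠ ⊤) (k : ℕ) :
    x ^ (2 ^ (k + 3) - 4) ∉ dyadicIdeal x y (k + 1) := by
  intro hmem
  have hk : 1 ≤ 2 ^ k := Nat.one_le_two_pow
  have hne : dyadic x y (k + 1) ≠ 0 := by
    intro hzero
    have hy : IsUnit y := isRelPrime_zero_left.mp (hzero ▸ isRelPrime_dyadic_right hxy (k + 1))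
    exact hproper (Ideal.eq_top_of_isUnit_mem _ (Ideal.subset_span (by simp)) hy)
  have hsq : x ^ (2 ^ (k + 3) - 4) = (x ^ (2 ^ (k + 2) - 2)) ^ 2 := by
    rw [← pow_mul]
    congr 1
    grind
  have hspan : x ^ (2 ^ (k + 3) - 4) ∈ Ideal.span {dyadic x y (k + 2) ^ 2, y} :=
    mem_span_sq_of_derivation_eq_zero hDx hDy hne (isRelPrime_dyadic_succ hxy k)
      (hsq ▸ derivation_sq_eq_zero D _) hmem
  obtain ⟨u, v, huv⟩ := Ideal.mem_span_pair.mp hspan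
  have hexp : x ^ (2 ^ (k + 2) - 1) = x * x ^ (2 ^ (k + 2) - 2) := by
    rw [← pow_succ']
    congr 1
    grind
  rw [dyadic_succ_eq_pow_add x y (k + 1), CharTwo.add_sq, hexp, hsq] at huv
  have hdvd : y ∣ (x ^ (2 ^ (k + 2) - 2)) ^ 2 * (1 - u * x ^ 2) :=
    ⟨u * y ^ 3 * dyadicTail x y (k + 1) ^ 2 + v, by linear_combination -huv⟩
  obtain ⟨w, hw⟩ := hxy.symm.pow_right.pow_right.dvd_of_dvd_mul_left hdvd
  refine hproper ((Ideal.eq_top_iff_one _).mpr (Ideal.mem_span_pair.mpr ⟨u * x, w, ?_⟩))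
  linear_combination -hw

end RelPrime

end Dyadic

theorem g4_of_neg {r : ℤ} (hr : r < 0) : g4 r = 0 := by
  rw [g4, if_pos hr.le, if_neg hr.ne]

theorem g4_zero : g4 0 = 1 := by
  simp [g4]

theorem g4_of_pos {r : ℤ} (hr : 0 < r) :
    g4 r = X 0 * g4 (r - 2) + X 1 * g4 (r - 3) + X 2 * g4 (r - 4) := by
  rw [g4, if_neg hr.not_ge]

theorem g4_two_mul_and_two_mul_add_one (r : ℤ) :
    g4 (2 * r) = g4 r ^ 2 + X 0 * g4 (r - 1) ^ 2 + X 2 * g4 (r - 2) ^ 2 ∧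
      g4 (2 * r + 1) = X 1 * g4 (r - 1) ^ 2 := by
  induction hm : (r + 1).toNat using Nat.strong_induction_on generalizing r with
  | _ m ih =>
  subst hm
  rcases lt_or_ge r 0 with hneg | hnonneg
  · grind [g4_of_neg]
  obtain ⟨even₁, odd₁⟩ := ih _ (by omega) (r - 1) rfl
  obtain ⟨even₂, odd₂⟩ := ih _ (by omega) (r - 2) rfl
  constructor
  · rcases hnonneg.eq_or_lt with rfl | hpos
    · simp [g4_zero, g4_of_neg]
    · have hrec := g4_of_pos hpos
      have hrec_two_mul := g4_of_pos (r := 2 * r) (by omega)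
      grind [CharTwo.two_eq_zero]
  · have hrec_two_mul_add_one := g4_of_pos (r := 2 * r + 1) (by omega)
    grind [CharTwo.two_eq_zero]

theorem g4_two_mul (r : ℤ) :
    g4 (2 * r) = g4 r ^ 2 + X 0 * g4 (r - 1) ^ 2 + X 2 * g4 (r - 2) ^ 2 :=
  (g4_two_mul_and_two_mul_add_one r).1

theorem g4_two_mul_add_one (r : ℤ) : g4 (2 * r + 1) = X 1 * g4 (r - 1) ^ 2 :=
  (g4_two_mul_and_two_mul_add_one r).2

theorem g4_two_pow_sub_three (k : ℕ) : g4 (2 ^ (k + 1) - 3) = 0 := by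
  induction k with
  | zero => exact g4_of_neg (by norm_num)
  | succ k ih =>
    rw [show (2 : ℤ) ^ (k + 1 + 1) - 3 = 2 * (2 ^ (k + 1) - 2) + 1 by ring, g4_two_mul_add_one,
      sub_sub, show (2 : ℤ) + 1 = 3 by norm_num, ih]
    simp

theorem g4_two_pow_succ_sub_one (k : ℕ) :
    g4 (2 ^ (k + 1) - 1) = X 1 * g4 (2 ^ k - 2) ^ 2 := by
  rw [show (2 : ℤ) ^ (k + 1) - 1 = 2 * (2 ^ k - 1) + 1 by ring, g4_two_mul_add_one, sub_sub,
    one_add_one_eq_two]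

theorem g4_two_pow_succ_sub_four (k : ℕ) :
    g4 (2 ^ (k + 2) - 4) = g4 (2 ^ (k + 1) - 2) ^ 2 + X 2 * g4 (2 ^ (k + 1) - 4) ^ 2 := by
  rw [show (2 : ℤ) ^ (k + 2) - 4 = 2 * (2 ^ (k + 1) - 2) by ring, g4_two_mul, sub_sub, sub_sub,
    show (2 : ℤ) + 1 = 3 by norm_num, show (2 : ℤ) + 2 = 4 by norm_num, g4_two_pow_sub_three]
  ring

theorem g4_two_pow_sub_two (k : ℕ) : g4 (2 ^ (k + 1) - 2) = dyadic (X 0) (X 1) k := by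
  induction k using Nat.twoStepInduction with
  | zero => simp [dyadic, g4_zero]
  | one => simp [dyadic, g4_of_pos, g4_of_neg, g4_zero]
  | more k ih ih' =>
    rw [show (2 : ℤ) ^ (k + 2 + 1) - 2 = 2 * (2 ^ (k + 1 + 1) - 1) by ring, g4_two_mul, sub_sub,
      sub_sub, one_add_one_eq_two, show (1 : ℤ) + 2 = 3 by norm_num, g4_two_pow_sub_three,
      g4_two_pow_succ_sub_one, ih, ih', dyadic]
    ring

theorem g4_two_pow_sub_one (k : ℕ) :
    g4 (2 ^ (k + 2) - 1) = X 1 * dyadic (X 0) (X 1) k ^ 2 := by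
  rw [g4_two_pow_succ_sub_one, g4_two_pow_sub_two]

theorem I4_succ_le {n : ℤ} (hn : 0 ≤ n) : I4 (n + 1) ≤ I4 n := by
  have hmem : ∀ r ∈ ({n - 3, n - 2, n - 1, n} : Set ℤ), g4 r ∈ I4 n := by
    rintro r (rfl | rfl | rfl | rfl) <;> exact Ideal.subset_span (by simp)
  rw [I4, Ideal.span_le]
  rintro f (rfl | rfl | rfl | rfl)
  · exact hmem _ (by grind)
  · exact hmem _ (by grind)
  · exact hmem _ (by grind)
  · rw [g4_of_pos (by omega)]
    exact add_mem (add_mem (Ideal.mul_mem_left _ _ (hmem _ (by grind)))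
      (Ideal.mul_mem_left _ _ (hmem _ (by grind)))) (Ideal.mul_mem_left _ _ (hmem _ (by grind)))

theorem antitoneOn_I4 : AntitoneOn I4 (Set.Ici 0) :=
  antitoneOn_of_add_one_le Set.ordConnected_Ici fun _ _ hn _ => I4_succ_le hn

theorem dyadicIdeal_le_I4 (k : ℕ) : dyadicIdeal (X 0) (X 1) k ≤ I4 (2 ^ (k + 2) + 1) := by
  rw [dyadicIdeal, ← g4_two_pow_sub_two, ← g4_two_pow_sub_one]
  refine Ideal.span_mono ?_
  rintro f (rfl | rfl)
  · exact Or.inl (by congr 1; ring)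
  · exact Or.inr (Or.inl (by congr 1; ring))

theorem dvd_map_X_two_mul_of_mem_I4 {S F : Type*} [CommRing S]
    [FunLike F (MvPolynomial (Fin 3) (ZMod 2)) S]
    [RingHomClass F (MvPolynomial (Fin 3) (ZMod 2)) S] (φ : F) {k : ℕ}
    (hsub_two : φ (g4 (2 ^ (k + 1) - 2)) = 0)
    (hsub_one : φ (g4 (2 ^ (k + 1) - 1)) = 0) {f : MvPolynomial (Fin 3) (ZMod 2)}
    (hf : f ∈ I4 (2 ^ (k + 1) - 2)) : φ (g4 (2 ^ (k + 1) - 4)) ∣ φ (X 2) * φ f := by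
  have hrec : g4 (2 ^ (k + 1) - 1) = X 1 * g4 (2 ^ (k + 1) - 4) + X 2 * g4 (2 ^ (k + 1) - 5) := by
    have : (1 : ℤ) ≤ 2 ^ k := one_le_pow₀ one_le_two
    rw [g4_of_pos (by omega), sub_sub, sub_sub, sub_sub]
    norm_num [g4_two_pow_sub_three]
  rw [I4] at hf
  induction hf using Submodule.span_induction with
  | mem f hf =>
    rcases hf with rfl | rfl | rfl | rfl
    · refine ⟨-φ (X 1), ?_⟩
      rw [hrec, map_add, map_mul, map_mul] at hsub_one
      rw [show (2 : ℤ) ^ (k + 1) - 2 - 3 = 2 ^ (k + 1) - 5 by ring]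
      linear_combination hsub_one
    · rw [show (2 : ℤ) ^ (k + 1) - 2 - 2 = 2 ^ (k + 1) - 4 by ring]
      exact dvd_mul_left _ _
    · rw [show (2 : ℤ) ^ (k + 1) - 2 - 1 = 2 ^ (k + 1) - 3 by ring, g4_two_pow_sub_three]
      simp
    · simp [hsub_two]
  | zero => simp
  | add f g _ _ hf hg => rw [map_add, mul_add]; exact dvd_add hf hg
  | smul r f _ hf => rw [smul_eq_mul, map_mul, mul_left_comm]; exact hf.mul_left _

section EvalCoeffs

variable {A : Type*} [CommRing A] [Algebra (ZMod 2) A]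

/-- The substitution `w₂ ↦ x`, `w₃ ↦ y` with values in the polynomial ring over `A` whose
variable is `w₄`. -/
noncomputable def evalCoeffs (x y : A) : MvPolynomial (Fin 3) (ZMod 2) →ₐ[ZMod 2] Polynomial A :=
  aeval ![Polynomial.C x, Polynomial.C y, Polynomial.X]

variable (x y : A)

theorem evalCoeffs_X_zero : evalCoeffs x y (X 0) = Polynomial.C x := by
  simp [evalCoeffs]

theorem evalCoeffs_X_one : evalCoeffs x y (X 1) = Polynomial.C y := by
  simp [evalCoeffs]

theorem evalCoeffs_X_two : evalCoeffs x y (X 2) = Polynomial.X := by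
  simp [evalCoeffs]

theorem evalCoeffs_dyadic (k : ℕ) :
    evalCoeffs x y (dyadic (X 0) (X 1) k) = Polynomial.C (dyadic x y k) := by
  rw [map_dyadic, map_dyadic, evalCoeffs_X_zero, evalCoeffs_X_one]

theorem evalCoeffs_g4_two_pow_sub_four [Nontrivial A] (k : ℕ) :
    (evalCoeffs x y (g4 (2 ^ (k + 2) - 4))).Monic ∧
      (evalCoeffs x y (g4 (2 ^ (k + 2) - 4))).natDegree = 2 ^ k - 1 := by
  induction k with
  | zero => simp [g4_zero]
  | succ k ih =>
    obtain ⟨hmonic, hdegree⟩ := ih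
    have hmonic' := Polynomial.monic_X.mul (hmonic.pow 2)
    have hdegree' : (Polynomial.X * evalCoeffs x y (g4 (2 ^ (k + 2) - 4)) ^ 2).natDegree =
        2 ^ (k + 1) - 1 := by
      have : 1 ≤ 2 ^ k := Nat.one_le_two_pow
      rw [Polynomial.monic_X.natDegree_mul (hmonic.pow 2), hmonic.natDegree_pow, hdegree,
        Polynomial.natDegree_X]
      omega
    have hrec : evalCoeffs x y (g4 (2 ^ (k + 1 + 2) - 4)) =
        Polynomial.X * evalCoeffs x y (g4 (2 ^ (k + 2) - 4)) ^ 2 +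
          Polynomial.C (dyadic x y (k + 1) ^ 2) := by
      rw [g4_two_pow_succ_sub_four, g4_two_pow_sub_two, map_add, map_mul, map_pow,
        map_pow, evalCoeffs_dyadic, evalCoeffs_X_two, map_pow]
      ring
    rw [hrec]
    refine ⟨hmonic'.add_of_left (Polynomial.degree_C_le.trans_lt ?_), ?_⟩
    · rw [← Polynomial.natDegree_pos_iff_degree_pos, hdegree']
      have : 1 ≤ 2 ^ k := Nat.one_le_two_pow
      omega
    · rw [Polynomial.natDegree_add_C, hdegree']

variable {x y}

theorem pow_eq_zero_of_X_zero_pow_mem_I4 {k m : ℕ} (hsub_two : dyadic x y (k + 3) = 0)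
    (hsub_one : y * dyadic x y (k + 2) ^ 2 = 0) (hmem : X 0 ^ m ∈ I4 (2 ^ (k + 4) - 2)) :
    x ^ m = 0 := by
  by_contra hne
  have : Nontrivial A := ⟨_, _, hne⟩
  have hmap_two : evalCoeffs x y (g4 (2 ^ (k + 4) - 2)) = 0 := by
    rw [g4_two_pow_sub_two (k + 3), evalCoeffs_dyadic, hsub_two, map_zero]
  have hmap_one : evalCoeffs x y (g4 (2 ^ (k + 4) - 1)) = 0 := by
    rw [g4_two_pow_sub_one (k + 2), map_mul, map_pow, evalCoeffs_X_one, evalCoeffs_dyadic,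
      ← map_pow, ← map_mul, hsub_one, map_zero]
  have hdvd : evalCoeffs x y (g4 (2 ^ (k + 4) - 4)) ∣ Polynomial.C (x ^ m) * Polynomial.X := by
    simpa [evalCoeffs_X_zero, evalCoeffs_X_two, mul_comm] using
      dvd_map_X_two_mul_of_mem_I4 (k := k + 3) (evalCoeffs x y) hmap_two hmap_one hmem
  obtain ⟨hmonic, hdegree⟩ := evalCoeffs_g4_two_pow_sub_four x y (k + 2)
  refine hmonic.not_dvd_of_natDegree_lt ?_ ?_ hdvd
  · rwa [Ne, Polynomial.C_mul_X_eq_monomial, Polynomial.monomial_eq_zero_iff]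
  · have : 1 ≤ 2 ^ k := Nat.one_le_two_pow
    rw [hdegree, Polynomial.natDegree_C_mul_X _ hne, pow_add]
    omega

end EvalCoeffs

theorem X_zero_pow_notMem_dyadicIdeal (k : ℕ) :
    (X 0 : MvPolynomial (Fin 3) (ZMod 2)) ^ (2 ^ (k + 3) - 4) ∉
      dyadicIdeal (X 0) (X 1) (k + 1) := by
  refine pow_two_pow_sub_four_notMem_dyadicIdeal (D := pderiv 0) (pderiv_X_self 0)
    (pderiv_X_of_ne (by decide)) ?_ ?_ k
  · exact X_prime.irreducible.isRelPrime_iff_not_dvd.mpr (by simp [X_dvd_X])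
  · intro htop
    obtain ⟨u, v, huv⟩ := Ideal.mem_span_pair.mp ((Ideal.eq_top_iff_one _).mp htop)
    simpa using congrArg constantCoeff huv

theorem X_zero_pow_notMem_I4 (k : ℕ) :
    (X 0 : MvPolynomial (Fin 3) (ZMod 2)) ^ (2 ^ (k + 4) - 4) ∉ I4 (2 ^ (k + 4) - 2) := by
  intro hmem
  let π := Ideal.Quotient.mk (dyadicIdeal (X 0 : MvPolynomial (Fin 3) (ZMod 2)) (X 1) (k + 2))
  refine X_zero_pow_notMem_dyadicIdeal (k + 1) (Ideal.Quotient.eq_zero_iff_mem.mp ?_)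
  rw [map_pow]
  refine pow_eq_zero_of_X_zero_pow_mem_I4 (x := π (X 0)) (y := π (X 1)) ?_ ?_ hmem
  · rw [← map_dyadic]
    exact Ideal.Quotient.eq_zero_iff_mem.mpr (dyadic_succ_mem_dyadicIdeal _ _ _)
  · rw [← map_dyadic, ← map_pow, ← map_mul]
    exact Ideal.Quotient.eq_zero_iff_mem.mpr (mul_dyadic_sq_mem_dyadicIdeal _ _ _)

/-- Theorem 3.1(1): for `t ≥ 4` and `n ∈ {2^t-2, 2^t-1, 2^t, 2^t+1}`, the image of `w_2`
in `F_2[w_2,w_3,w_4]/I_{n,4}` has height exactly `2^t - 4`, i.e.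
`w_2^{2^t-4} ∉ I_{n,4}` and `w_2^{2^t-3} ∈ I_{n,4}`. -/
theorem stmt5 (t : ℕ) (ht : 4 ≤ t) (n : ℤ)
    (hn : n = 2 ^ t - 2 ∨ n = 2 ^ t - 1 ∨ n = 2 ^ t ∨ n = 2 ^ t + 1) :
    (X 0 : MvPolynomial (Fin 3) (ZMod 2)) ^ (2 ^ t - 4) ∉ I4 n ∧
      (X 0 : MvPolynomial (Fin 3) (ZMod 2)) ^ (2 ^ t - 3) ∈ I4 n := by
  obtain ⟨k, rfl⟩ := Nat.exists_eq_add_of_le' ht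
  have hlower : (0 : ℤ) ≤ 2 ^ (k + 4) - 2 := sub_nonneg.mpr (le_self_pow₀ one_le_two (by omega))
  have hn_nonneg : 0 ≤ n := by omega
  have hupper : (0 : ℤ) ≤ 2 ^ (k + 4) + 1 := by positivity
  constructor
  · intro hmem
    exact X_zero_pow_notMem_I4 k (antitoneOn_I4 hlower hn_nonneg (by omega) hmem)
  · have hmem := pow_two_pow_sub_three_mem_dyadicIdeal
      (X 0 : MvPolynomial (Fin 3) (ZMod 2)) (X 1) (k + 2)
    exact antitoneOn_I4 hn_nonneg hupper (by omega) (dyadicIdeal_le_I4 (k + 2) hmem)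
end
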